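/- Let d ≥ 2 and 1 ≤ d₁ ≤ d be integers and let C > 0 be a real constant. There exist constants A > 0, B > 0, and n₀ such that for every integer k with n = 2^k ≥ n₀ the following holds. For 1 ≤ i ≤ k and i − 1 ≤ j ≤ k set s_j = n/2^{j−1}, j₀(i) = (1/d)·log₂ n + (1 − d₁/d)·(i − 1) − (1 + 1/d)·log₂ log₂ n − B, and Δ_j^i = A · (1 + |j − j₀(i)|)^{−2} · n^{1/2 − 1/(2d)} · 2^{−(1/2 − d₁/(2d))·(i−1)} · (log₂ n)^{1/2 + 1/(2d)}. Then ∑_{i=1}^{k} ∑_{j=i−1}^{k} C · j^d · 2^{jd} · 2^{−(d−d₁)(i−1)} · exp(−(Δ_j^i)² / (16·s_j)) ≤ n/16. -/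

import Mathlib

/-- The index `j₀(i)` at which the entropy summands peak:
`j₀ = (1/d)·log₂ n + (1 − d₁/d)·(i − 1) − (1 + 1/d)·log₂ log₂ n − B`. -/
noncomputable def jZero (B : ℝ) (d d₁ : ℕ) (n : ℝ) (i : ℕ) : ℝ :=
  (1 / (d : ℝ)) * Real.logb 2 n + (1 - (d₁ : ℝ) / (d : ℝ)) * ((i : ℝ) - 1) -
    (1 + 1 / (d : ℝ)) * Real.logb 2 (Real.logb 2 n) - B

/-- The size-sensitive discrepancy parameter
`Δ_j^i = A · (1 + |j − j₀(i)|)^{−2} · n^{1/2 − 1/(2d)} · 2^{−(1/2 − d₁/(2d))·(i−1)} ·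
(log₂ n)^{1/2 + 1/(2d)}`. -/
noncomputable def Delta (A B : ℝ) (d d₁ : ℕ) (n : ℝ) (i j : ℕ) : ℝ :=
  A / (1 + |(j : ℝ) - jZero B d d₁ n i|) ^ 2 *
    n ^ ((1 : ℝ) / 2 - 1 / (2 * (d : ℝ))) *
    (2 : ℝ) ^ (-((1 : ℝ) / 2 - (d₁ : ℝ) / (2 * (d : ℝ))) * ((i : ℝ) - 1)) *
    Real.logb 2 n ^ ((1 : ℝ) / 2 + 1 / (2 * (d : ℝ)))

/-!
Write `n` for the size, `L = log₂ n` and `t = j - j₀(i)`. The definitions of `j₀` and `Δ` are tuned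
so that, apart from `j^d` and factors free of `i` and `j`, the summand depends on `t` alone:
`2^{jd} 2^{-(d-d₁)(i-1)} = n 2^{-Bd} L^{-(d+1)} 2^{td}`, and if `A² = 2^{5+B}` then
`(Δ_j^i)² / (16 s_j) = 2^t / (1+|t|)⁴`. The profile `2^{td} exp(-2^t / (1+|t|)⁴)` decays
geometrically on both sides of `t = 0`, so its sum over `j` is bounded uniformly in `i`. The factor
`j^d ≤ L^d` leaves `1 / L` of the weight, so each of the `L` values of `i` contributes at most a
constant times `C 2^{-Bd} n / L`, and a large `B` brings the total below `n / 16`.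
-/

open Real Finset Filter Topology

section GeometricSums

lemma hasSum_int_half_pow_natAbs : HasSum (fun m : ℤ ↦ ((1 : ℝ) / 2) ^ m.natAbs) 3 := by
  have nonneg_part : HasSum (fun m : ℕ ↦ ((1 : ℝ) / 2) ^ (m : ℤ).natAbs) 2 := by
    simpa only [Int.natAbs_natCast] using hasSum_geometric_two
  have natAbs_neg_succ (m : ℕ) : (-((m : ℤ) + 1)).natAbs = m + 1 := by lia
  have neg_part : HasSum (fun m : ℕ ↦ ((1 : ℝ) / 2) ^ (-((m : ℤ) + 1)).natAbs) 1 := by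
    simpa only [natAbs_neg_succ, pow_succ, mul_one_div_cancel (two_ne_zero' ℝ)] using
      hasSum_geometric_two.mul_right ((1 : ℝ) / 2)
  rw [← two_add_one_eq_three]
  exact nonneg_part.of_nat_of_neg_add_one neg_part

lemma two_rpow_neg_abs_sub_le (j : ℤ) (x : ℝ) :
    (2 : ℝ) ^ (-|(j : ℝ) - x|) ≤ 2 * (1 / 2) ^ (j - ⌊x⌋).natAbs := by
  have abs_le_natAbs : ((j - ⌊x⌋).natAbs : ℝ) ≤ |(j : ℝ) - x| + 1 := by
    have fract_le : |x - ⌊x⌋| ≤ 1 := by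
      rw [abs_le]
      constructor <;> linarith [Int.floor_le x, Int.lt_floor_add_one x]
    rw [Nat.cast_natAbs, Int.cast_abs, Int.cast_sub]
    linarith [abs_sub_le (j : ℝ) x ⌊x⌋]
  calc (2 : ℝ) ^ (-|(j : ℝ) - x|)
      ≤ 2 ^ (1 + -((j - ⌊x⌋).natAbs : ℝ)) :=
        rpow_le_rpow_of_exponent_le one_le_two (by linarith)
    _ = 2 * (1 / 2) ^ (j - ⌊x⌋).natAbs := by
        rw [rpow_add two_pos, rpow_one, rpow_neg two_pos.le, rpow_natCast, one_div, inv_pow]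

lemma sum_two_rpow_neg_abs_sub_le (s : Finset ℤ) (x : ℝ) :
    ∑ j ∈ s, (2 : ℝ) ^ (-|(j : ℝ) - x|) ≤ 6 := by
  have shifted : HasSum (fun j : ℤ ↦ ((1 : ℝ) / 2) ^ (j - ⌊x⌋).natAbs) 3 := by
    simpa only [Function.comp_def, Equiv.subRight_apply] using
      (Equiv.subRight ⌊x⌋).hasSum_iff.mpr hasSum_int_half_pow_natAbs
  calc ∑ j ∈ s, (2 : ℝ) ^ (-|(j : ℝ) - x|)
      ≤ ∑ j ∈ s, 2 * ((1 : ℝ) / 2) ^ (j - ⌊x⌋).natAbs :=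
        sum_le_sum fun j _ ↦ two_rpow_neg_abs_sub_le j x
    _ = 2 * ∑ j ∈ s, ((1 : ℝ) / 2) ^ (j - ⌊x⌋).natAbs := (mul_sum ..).symm
    _ ≤ 2 * 3 := by
        gcongr
        exact sum_le_hasSum s (fun _ _ ↦ by positivity) shifted
    _ = 6 := by norm_num

end GeometricSums

section PeakProfile

/-- The shape `2^{td} exp(-2^t / (1+|t|)⁴)` of the entropy summands as a function of the distance
`t` to the peak. -/
noncomputable def peakProfile (d : ℕ) (t : ℝ) : ℝ :=
  2 ^ (t * d) * exp (-(2 ^ t / (1 + |t|) ^ 4))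

/-- The constant in the geometric bound for `peakProfile d`. -/
noncomputable def peakConst (d : ℕ) : ℝ :=
  (16 ^ 4) ^ (2 * (d + 1)) * (2 * (d + 1)).factorial

lemma one_le_peakConst (d : ℕ) : 1 ≤ peakConst d :=
  one_le_mul_of_one_le_of_one_le (one_le_pow₀ (by norm_num))
    (Nat.one_le_cast.mpr (Nat.factorial_pos _))

lemma one_add_le_two_rpow {t : ℝ} (ht : 0 ≤ t) : 1 + t ≤ 16 * 2 ^ (t / 8) := by
  have linear_le_exp : log 2 * (t / 8) + 1 ≤ 2 ^ (t / 8) := by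
    rw [rpow_def_of_pos two_pos]
    exact add_one_le_exp _
  nlinarith [log_two_gt_d9]

lemma two_rpow_half_div_le {t : ℝ} (ht : 0 ≤ t) :
    (2 : ℝ) ^ (t / 2) / 16 ^ 4 ≤ 2 ^ t / (1 + |t|) ^ 4 := by
  have fourth_power_le : (1 + t) ^ 4 ≤ 16 ^ 4 * (2 : ℝ) ^ (t / 2) := calc
    (1 + t) ^ 4 ≤ (16 * (2 : ℝ) ^ (t / 8)) ^ 4 := by gcongr; exact one_add_le_two_rpow ht
    _ = 16 ^ 4 * (2 : ℝ) ^ (t / 2) := by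
      rw [mul_pow, ← rpow_mul_natCast two_pos.le]
      ring_nf
  rw [abs_of_nonneg ht, div_le_div_iff₀ (by positivity) (by positivity)]
  calc (2 : ℝ) ^ (t / 2) * (1 + t) ^ 4
      ≤ 2 ^ (t / 2) * (16 ^ 4 * 2 ^ (t / 2)) := by gcongr
    _ = 2 ^ t * 16 ^ 4 := by
        rw [mul_left_comm, ← rpow_add two_pos, add_halves, mul_comm]

lemma peakProfile_le_of_nonpos {d : ℕ} (hd : 1 ≤ d) {t : ℝ} (ht : t ≤ 0) :
    peakProfile d t ≤ 2 ^ t := by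
  have weight_le : (2 : ℝ) ^ (t * d) ≤ 2 ^ t :=
    rpow_le_rpow_of_exponent_le one_le_two
      (mul_le_of_one_le_right ht (Nat.one_le_cast.mpr hd))
  have exp_le : exp (-(2 ^ t / (1 + |t|) ^ 4)) ≤ 1 :=
    exp_le_one_iff.mpr (neg_nonpos.mpr (by positivity))
  exact (mul_le_of_le_one_right (by positivity) exp_le).trans weight_le

lemma peakProfile_le_of_nonneg (d : ℕ) {t : ℝ} (ht : 0 ≤ t) :
    peakProfile d t ≤ peakConst d * 2 ^ (-t) := by
  -- This power of `2^{t/2}` pays for both the weight `2^{td}` and the decay `2^{-t}`.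
  set N := 2 * (d + 1)
  set y : ℝ := 2 ^ (t / 2) / 16 ^ 4
  have weight_eq : (2 : ℝ) ^ (t * d) = (16 ^ 4) ^ N * y ^ N * 2 ^ (-t) := by
    rw [← mul_pow, mul_div_cancel₀ _ (by positivity), ← rpow_mul_natCast two_pos.le,
      ← rpow_add two_pos]
    simp only [N]
    push_cast
    ring_nf
  have y_pow_le : y ^ N ≤ N.factorial * exp y :=
    (div_le_iff₀' (by positivity)).mp (pow_div_factorial_le_exp y (by positivity) N)
  calc peakProfile d t
      ≤ (16 ^ 4) ^ N * y ^ N * 2 ^ (-t) * exp (-y) := by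
        rw [peakProfile, weight_eq]
        gcongr
        exact two_rpow_half_div_le ht
    _ ≤ (16 ^ 4) ^ N * (N.factorial * exp y) * 2 ^ (-t) * exp (-y) := by gcongr
    _ = peakConst d * 2 ^ (-t) * (exp y * exp (-y)) := by
        rw [peakConst]
        ring
    _ = peakConst d * 2 ^ (-t) := by rw [← exp_add, add_neg_cancel, exp_zero, mul_one]

lemma peakProfile_le {d : ℕ} (hd : 1 ≤ d) (t : ℝ) :
    peakProfile d t ≤ peakConst d * 2 ^ (-|t|) := by
  rcases le_total t 0 with ht | ht
  · rw [abs_of_nonpos ht, neg_neg]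
    exact (peakProfile_le_of_nonpos hd ht).trans
      (le_mul_of_one_le_left (by positivity) (one_le_peakConst d))
  · rw [abs_of_nonneg ht]
    exact peakProfile_le_of_nonneg d ht

lemma sum_peakProfile_le {d : ℕ} (hd : 1 ≤ d) (s : Finset ℕ) (x : ℝ) :
    ∑ j ∈ s, peakProfile d (j - x) ≤ 6 * peakConst d := by
  have geometric_sum_le : ∑ j ∈ s, (2 : ℝ) ^ (-|(j : ℝ) - x|) ≤ 6 := by
    simpa only [sum_map, Nat.castEmbedding_apply, Int.cast_natCast] using
      sum_two_rpow_neg_abs_sub_le (s.map Nat.castEmbedding) x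
  calc ∑ j ∈ s, peakProfile d (j - x)
      ≤ ∑ j ∈ s, peakConst d * 2 ^ (-|(j : ℝ) - x|) := sum_le_sum fun j _ ↦ peakProfile_le hd _
    _ = peakConst d * ∑ j ∈ s, 2 ^ (-|(j : ℝ) - x|) := (mul_sum ..).symm
    _ ≤ peakConst d * 6 := by
        gcongr
        exact zero_le_one.trans (one_le_peakConst d)
    _ = 6 * peakConst d := mul_comm ..

end PeakProfile

section EntropySummand

/-- The summand `C j^d 2^{jd} 2^{-(d-d₁)(i-1)} exp(-(Δ_j^i)² / (16 s_j))` of the entropy sum, with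
`s_j = n / 2^{j-1}`. -/
noncomputable def entropySummand (A B C : ℝ) (d d₁ : ℕ) (n : ℝ) (i j : ℕ) : ℝ :=
  C * (j : ℝ) ^ d * 2 ^ (j * d) / 2 ^ ((d - d₁) * (i - 1)) *
    exp (-(Delta A B d d₁ n i j) ^ 2 / (16 * (n / (2 : ℝ) ^ ((j : ℝ) - 1))))

variable {A B C n : ℝ} {d d₁ i : ℕ}

lemma exists_two_rpow_two_rpow_eq (hn : 1 < n) : ∃ l : ℝ, (2 : ℝ) ^ (2 : ℝ) ^ l = n := by
  refine ⟨logb 2 (logb 2 n), ?_⟩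
  rw [rpow_logb two_pos (by norm_num) (logb_pos one_lt_two hn),
    rpow_logb two_pos (by norm_num) (by positivity)]

lemma logb_two_two_rpow (x : ℝ) : logb 2 (2 ^ x) = x :=
  logb_rpow two_pos (by norm_num)

lemma two_pow_div_two_pow_eq (B : ℝ) (hd : d ≠ 0) (hd₁ : d₁ ≤ d) (hn : 1 < n) (hi : 1 ≤ i)
    (j : ℕ) :
    (2 : ℝ) ^ (j * d) / 2 ^ ((d - d₁) * (i - 1)) =
      n * 2 ^ (-(B * d)) / logb 2 n ^ (d + 1) * 2 ^ ((j - jZero B d d₁ n i) * d) := by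
  obtain ⟨l, rfl⟩ := exists_two_rpow_two_rpow_eq hn
  simp only [jZero, logb_two_two_rpow]
  rw [← rpow_mul_natCast two_pos.le, ← rpow_natCast 2 (j * d), ← rpow_natCast 2 (_ * (i - 1)),
    ← rpow_sub two_pos, ← rpow_add two_pos, ← rpow_sub two_pos, ← rpow_add two_pos]
  congr 1
  push_cast [hd₁, hi]
  field_simp
  ring

lemma Delta_sq_div_eq (A B : ℝ) (d₁ i : ℕ) (hd : d ≠ 0) (hn : 1 < n) (j : ℕ) :
    Delta A B d d₁ n i j ^ 2 / (16 * (n / (2 : ℝ) ^ ((j : ℝ) - 1))) =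
      A ^ 2 / 2 ^ (5 + B) *
        (2 ^ (j - jZero B d d₁ n i) / (1 + |j - jZero B d d₁ n i|) ^ 4) := by
  obtain ⟨l, rfl⟩ := exists_two_rpow_two_rpow_eq hn
  set t := (j : ℝ) - jZero B d d₁ (2 ^ (2 : ℝ) ^ l) i with ht
  have sixteen_eq : (16 : ℝ) = 2 ^ (4 : ℝ) := by norm_num
  have two_powers_eq :
      ((2 : ℝ) ^ ((2 : ℝ) ^ l * (1 / 2 - 1 / (2 * d)) +
        -(1 / 2 - d₁ / (2 * d)) * ((i : ℝ) - 1) + l * (1 / 2 + 1 / (2 * d)))) ^ 2 /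
        (16 * (2 ^ (2 : ℝ) ^ l / 2 ^ ((j : ℝ) - 1))) = 2 ^ t / 2 ^ (5 + B) := by
    rw [sixteen_eq, ← rpow_mul_natCast two_pos.le, ← rpow_sub two_pos, ← rpow_add two_pos,
      ← rpow_sub two_pos, ← rpow_sub two_pos]
    congr 1
    simp only [ht, jZero, logb_two_two_rpow]
    push_cast
    field_simp
    ring
  calc _ = (A / (1 + |t|) ^ 2 * _) ^ 2 / (16 * (2 ^ (2 : ℝ) ^ l / 2 ^ ((j : ℝ) - 1))) := by
        rw [Delta, logb_two_two_rpow, ← rpow_mul two_pos.le, ← rpow_mul two_pos.le, mul_assoc,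
          mul_assoc, ← rpow_add two_pos, ← rpow_add two_pos, ← add_assoc]
    _ = A ^ 2 / (1 + |t|) ^ 4 * (2 ^ t / 2 ^ (5 + B)) := by
        rw [mul_pow, div_pow, ← pow_mul, mul_div_assoc, two_powers_eq]
    _ = _ := by ring

lemma entropySummand_eq (C : ℝ) (hA : A ^ 2 = 2 ^ (5 + B)) (hd : d ≠ 0) (hd₁ : d₁ ≤ d)
    (hn : 1 < n) (hi : 1 ≤ i) (j : ℕ) :
    entropySummand A B C d d₁ n i j =
      C * (j : ℝ) ^ d * (n * 2 ^ (-(B * d)) / logb 2 n ^ (d + 1)) *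
        peakProfile d (j - jZero B d d₁ n i) := by
  rw [entropySummand, mul_div_assoc, two_pow_div_two_pow_eq B hd hd₁ hn hi, neg_div,
    Delta_sq_div_eq A B d₁ i hd hn, hA, div_self (by positivity), one_mul, peakProfile]
  ring

lemma sum_entropySummand_le (hA : A ^ 2 = 2 ^ (5 + B)) (hC : 0 ≤ C) (hd : 1 ≤ d)
    (hd₁ : d₁ ≤ d) (hn : 1 < n) (hi : 1 ≤ i) {s : Finset ℕ} (hs : ∀ j ∈ s, (j : ℝ) ≤ logb 2 n) :
    ∑ j ∈ s, entropySummand A B C d d₁ n i j ≤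
      6 * C * peakConst d * 2 ^ (-(B * d)) * (n / logb 2 n) := by
  have log_pos : 0 < logb 2 n := logb_pos one_lt_two hn
  have summand_le : ∀ j ∈ s, entropySummand A B C d d₁ n i j ≤
      C * 2 ^ (-(B * d)) * (n / logb 2 n) * peakProfile d (j - jZero B d d₁ n i) := by
    intro j hj
    have profile_nonneg : 0 ≤ peakProfile d (j - jZero B d d₁ n i) := by
      unfold peakProfile
      positivity
    rw [entropySummand_eq C hA (by lia) hd₁ hn hi]
    gcongr ?_ * _
    calc C * (j : ℝ) ^ d * (n * 2 ^ (-(B * d)) / logb 2 n ^ (d + 1))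
        ≤ C * logb 2 n ^ d * (n * 2 ^ (-(B * d)) / logb 2 n ^ (d + 1)) := by
          gcongr
          exact hs j hj
      _ = C * 2 ^ (-(B * d)) * (n / logb 2 n) := by
          rw [pow_succ]
          field_simp
  calc ∑ j ∈ s, entropySummand A B C d d₁ n i j
      ≤ C * 2 ^ (-(B * d)) * (n / logb 2 n) * ∑ j ∈ s, peakProfile d (j - jZero B d d₁ n i) := by
        rw [mul_sum]
        exact sum_le_sum summand_le
    _ ≤ C * 2 ^ (-(B * d)) * (n / logb 2 n) * (6 * peakConst d) := by
        gcongr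
        exact sum_peakProfile_le hd s _
    _ = 6 * C * peakConst d * 2 ^ (-(B * d)) * (n / logb 2 n) := by ring

lemma sum_sum_entropySummand_le (hA : A ^ 2 = 2 ^ (5 + B)) (hC : 0 ≤ C) (hd : 1 ≤ d)
    (hd₁ : d₁ ≤ d) {k : ℕ} (hk : k ≠ 0) :
    ∑ i ∈ Icc 1 k, ∑ j ∈ Icc (i - 1) k, entropySummand A B C d d₁ (2 ^ k) i j ≤
      6 * C * peakConst d * 2 ^ (-(B * d)) * 2 ^ k := by
  have logb_eq : logb 2 ((2 : ℝ) ^ k) = k := by rw [← rpow_natCast, logb_two_two_rpow]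
  have row_le : ∀ i ∈ Icc 1 k, ∑ j ∈ Icc (i - 1) k, entropySummand A B C d d₁ (2 ^ k) i j ≤
      6 * C * peakConst d * 2 ^ (-(B * d)) * (2 ^ k / k) := by
    intro i hi
    have le_logb : ∀ j ∈ Icc (i - 1) k, (j : ℝ) ≤ logb 2 ((2 : ℝ) ^ k) := fun j hj ↦ by
      rw [logb_eq]
      exact Nat.cast_le.mpr (mem_Icc.mp hj).2
    simpa only [logb_eq] using sum_entropySummand_le hA hC hd hd₁ (one_lt_pow₀ one_lt_two hk)
      (mem_Icc.mp hi).1 le_logb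
  calc ∑ i ∈ Icc 1 k, ∑ j ∈ Icc (i - 1) k, entropySummand A B C d d₁ (2 ^ k) i j
      ≤ #(Icc 1 k) • (6 * C * peakConst d * 2 ^ (-(B * d)) * (2 ^ k / k)) :=
        sum_le_card_nsmul _ _ _ row_le
    _ = 6 * C * peakConst d * 2 ^ (-(B * d)) * 2 ^ k := by
        rw [Nat.card_Icc, Nat.add_sub_cancel, nsmul_eq_mul]
        field_simp

end EntropySummand

lemma exists_pos_mul_two_rpow_neg_mul_le (a : ℝ) {p ε : ℝ} (hp : 0 < p) (hε : 0 < ε) :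
    ∃ B : ℝ, 0 < B ∧ a * 2 ^ (-(B * p)) ≤ ε := by
  have tendsto_zero : Tendsto (fun B : ℝ ↦ a * 2 ^ (-(B * p))) atTop (𝓝 0) := by
    have exponent_atBot : Tendsto (fun B : ℝ ↦ -(B * p)) atTop atBot :=
      tendsto_neg_atTop_atBot.comp (tendsto_id.atTop_mul_const hp)
    simpa only [mul_zero, Function.comp_def] using
      ((tendsto_rpow_atBot_of_base_gt_one 2 one_lt_two).comp exponent_atBot).const_mul a
  exact ((eventually_gt_atTop 0).and (tendsto_zero.eventually_le_const hε)).exists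

theorem stmt10_general (d : ℕ) (hd : 1 ≤ d) (C : ℝ) (hC : 0 < C) :
    ∃ A B : ℝ, 0 < A ∧ 0 < B ∧ ∀ d₁ ≤ d, ∀ k : ℕ,
      ∑ i ∈ Icc 1 k, ∑ j ∈ Icc (i - 1) k, entropySummand A B C d d₁ (2 ^ k) i j ≤ 2 ^ k / 16 := by
  obtain ⟨B, hB, const_le⟩ : ∃ B : ℝ, 0 < B ∧ 6 * C * peakConst d * 2 ^ (-(B * d)) ≤ 1 / 16 :=
    exists_pos_mul_two_rpow_neg_mul_le _ (Nat.cast_pos.mpr hd) (by norm_num)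
  refine ⟨√(2 ^ (5 + B)), B, by positivity, hB, fun d₁ hd₁ k ↦ ?_⟩
  rcases eq_or_ne k 0 with rfl | hk
  · simp
  calc _ ≤ 6 * C * peakConst d * 2 ^ (-(B * d)) * 2 ^ k :=
        sum_sum_entropySummand_le (sq_sqrt (by positivity)) hC.le hd hd₁ hk
    _ ≤ 1 / 16 * 2 ^ k := by gcongr
    _ = 2 ^ k / 16 := by ring

/-- the entropy-sum inequality.
Let `d ≥ 2`, `1 ≤ d₁ ≤ d` be integers and `C > 0`. There exist constants `A, B > 0` and
`n₀` such that for every `k` with `n = 2^k ≥ n₀`, with `s_j = n/2^{j−1}` and `Δ_j^i` as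
above, `∑_{i=1}^{k} ∑_{j=i−1}^{k} C·j^d·2^{jd}·2^{−(d−d₁)(i−1)}·exp(−(Δ_j^i)²/(16·s_j))
≤ n/16`. -/
theorem stmt10 (d d₁ : ℕ) (hd : 2 ≤ d) (hd₁ : 1 ≤ d₁) (hd₁d : d₁ ≤ d)
    (C : ℝ) (hC : 0 < C) :
    ∃ A B : ℝ, 0 < A ∧ 0 < B ∧ ∃ n₀ : ℕ, ∀ k : ℕ, n₀ ≤ 2 ^ k →
      ∑ i ∈ Finset.Icc 1 k, ∑ j ∈ Finset.Icc (i - 1) k,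
        C * (j : ℝ) ^ d * 2 ^ (j * d) / 2 ^ ((d - d₁) * (i - 1)) *
          Real.exp (-(Delta A B d d₁ ((2 : ℝ) ^ k) i j) ^ 2 /
            (16 * ((2 : ℝ) ^ k / (2 : ℝ) ^ ((j : ℝ) - 1)))) ≤ (2 : ℝ) ^ k / 16 := by
  obtain ⟨A, B, hA, hB, sum_le⟩ := stmt10_general d (one_le_two.trans hd) C hC
  exact ⟨A, B, hA, hB, 0, fun k _ ↦ sum_le d₁ hd₁d k⟩
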